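/- Let a > −1, μ ∈ {0,1}, m ≥ 1, n = 2m + μ, let k ≥ 0 be an integer and 0 < s < 1. For an integer j, define A_j = ∫_{(−1,1)^n} 1[ #{i : |x_i| < s} = j ] · ∏_{i=1}^{n} (1 − x_i²)^a · ∏_{1≤i<l≤n} |x_l − x_i| dx and Z₁ = ∫_{(−1,1)^n} ∏_{i=1}^{n} (1 − x_i²)^a · ∏_{1≤i<l≤n} |x_l − x_i| dx, with the convention A_j = 0 for j < 0. Further define B_k = ∫_{(0,1)^m} 1[ #{i : y_i < s²} = k ] · ∏_{i=1}^{m} y_i^{μ−1/2} (1 − y_i)^{2a+1} · ∏_{1≤i<l≤m} (y_l − y_i)² dy and Z₂ = ∫_{(0,1)^m} ∏_{i=1}^{m} y_i^{μ−1/2} (1 − y_i)^{2a+1} · ∏_{1≤i<l≤m} (y_l − y_i)² dy. Then all these integrals are finite, Z₁ > 0, Z₂ > 0, and (A_{2k+μ−1} + A_{2k+μ}) / Z₁ = B_k / Z₂. -/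

import Mathlib

open MeasureTheory

/-- The integrand of the symmetric Jacobi OE gap-counting integral `A_j` on `(-1,1)^n`. -/
noncomputable def joeGapIntegrand (n : ℕ) (a : ℝ) (s : ℝ) (j : ℤ) (x : Fin n → ℝ) : ℝ :=
  if ((Finset.univ.filter fun i => |x i| < s).card : ℤ) = j then
    (∏ i, (1 - (x i) ^ 2) ^ a) * ∏ k, ∏ l ∈ Finset.Iio k, |x k - x l|
  else 0

/-- The integrand of the symmetric Jacobi OE normalization `Z₁`. -/
noncomputable def joeTotalIntegrand (n : ℕ) (a : ℝ) (x : Fin n → ℝ) : ℝ :=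
  (∏ i, (1 - (x i) ^ 2) ^ a) * ∏ k, ∏ l ∈ Finset.Iio k, |x k - x l|

/-- The integrand of the Jacobi UE gap-counting integral `B_k` on `(0,1)^m`. -/
noncomputable def jueGapIntegrand (m μ : ℕ) (a : ℝ) (c : ℝ) (k : ℕ) (y : Fin m → ℝ) : ℝ :=
  if (Finset.univ.filter fun i => y i < c).card = k then
    (∏ i, (y i) ^ ((μ : ℝ) - 1 / 2) * (1 - y i) ^ (2 * a + 1)) *
      ∏ i, ∏ l ∈ Finset.Iio i, (y i - y l) ^ 2
  else 0

/-- The integrand of the Jacobi UE normalization `Z₂`. -/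
noncomputable def jueTotalIntegrand (m μ : ℕ) (a : ℝ) (y : Fin m → ℝ) : ℝ :=
  (∏ i, (y i) ^ ((μ : ℝ) - 1 / 2) * (1 - y i) ^ (2 * a + 1)) *
    ∏ i, ∏ l ∈ Finset.Iio i, (y i - y l) ^ 2

lemma lintegral_decomp {X ι : Type*} [MeasureSpace X] [Fintype ι] (e : ι → X ≃ᵐ X)
    (he : ∀ i, MeasurePreserving (e i) volume volume) {D : Set X} (hD : MeasurableSet D)
    (hdisj : ∀ i j x, e i x ∈ D → e j x ∈ D → i = j)
    (hcov : ∀ᵐ x : X, ∃ i, e i x ∈ D) (f : X → ENNReal) :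
    ∫⁻ x, f x = ∑ i, ∫⁻ x in D, f ((e i).symm x) := by
  have h1 : (⋃ i, (e i) ⁻¹' D : Set X) =ᵐ[volume] Set.univ := by
    rw [Filter.eventuallyEq_univ]
    filter_upwards [hcov] with x hx
    simpa using hx
  rw [← setLIntegral_univ, ← setLIntegral_congr h1, lintegral_iUnion, tsum_fintype]
  · refine Finset.sum_congr rfl fun i _ => ?_
    have h := (he i).setLIntegral_comp_preimage_emb (e i).measurableEmbedding
      (fun x => f ((e i).symm x)) D
    simpa only [MeasurableEquiv.symm_apply_apply] using h
  · exact fun i => (e i).measurable hD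
  · intro i j hij
    rw [Function.onFun, Set.disjoint_left]
    intro x hx hx'
    exact hij (hdisj i j x hx hx')

lemma ae_injective (n : ℕ) : ∀ᵐ x : Fin n → ℝ, Function.Injective x := by
  have : ∀ i j : Fin n, i ≠ j → ∀ᵐ x : Fin n → ℝ, x i ≠ x j := by
    intro i j hij
    let S : Submodule ℝ (Fin n → ℝ) :=
      LinearMap.ker ((LinearMap.proj i : (Fin n → ℝ) →ₗ[ℝ] ℝ) - LinearMap.proj j)
    have hS : S ≠ ⊤ := by
      intro h
      have : (Pi.single i 1 : Fin n → ℝ) ∈ S := by rw [h]; trivial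
      simp [S, LinearMap.mem_ker, hij.symm] at this
    have h0 := Measure.addHaar_submodule (volume : Measure (Fin n → ℝ)) S hS
    rw [ae_iff]
    convert h0 using 2
    ext x
    simp [S, sub_eq_zero]
  have h2 : ∀ᵐ x : Fin n → ℝ, ∀ i j : Fin n, i ≠ j → x i ≠ x j := by
    rw [ae_all_iff]; intro i
    rw [ae_all_iff]; intro j
    by_cases h : i = j
    · simp [h]
    · filter_upwards [this i j h] with x hx _ using hx
  filter_upwards [h2] with x hx i j hij
  by_contra h
  exact hx i j h hij

lemma ae_ne_zero (n : ℕ) : ∀ᵐ x : Fin n → ℝ, ∀ i, x i ≠ 0 := by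
  rw [ae_all_iff]
  intro i
  let S : Submodule ℝ (Fin n → ℝ) := LinearMap.ker (LinearMap.proj i : (Fin n → ℝ) →ₗ[ℝ] ℝ)
  have hS : S ≠ ⊤ := by
    intro h
    have : (Pi.single i 1 : Fin n → ℝ) ∈ S := by rw [h]; trivial
    simp [S, LinearMap.mem_ker] at this
  have h0 := Measure.addHaar_submodule (volume : Measure (Fin n → ℝ)) S hS
  rw [ae_iff]
  convert h0 using 2
  ext x
  simp [S]

lemma measurableSet_strictMono (n : ℕ) : MeasurableSet {x : Fin n → ℝ | StrictMono x} := by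
  have : {x : Fin n → ℝ | StrictMono x} = ⋂ i, ⋂ j, {x | i < j → x i < x j} := by
    ext x; simp [StrictMono]
  rw [this]
  refine MeasurableSet.iInter fun i => MeasurableSet.iInter fun j => ?_
  by_cases h : i < j
  · simp only [h, forall_const]
    exact measurableSet_lt (measurable_pi_apply i) (measurable_pi_apply j)
  · simp [h]

lemma lintegral_sort {n : ℕ} (f : (Fin n → ℝ) → ENNReal)
    (hf : ∀ (σ : Equiv.Perm (Fin n)) x, f (x ∘ σ) = f x) :
    ∫⁻ x, f x = (n.factorial : ENNReal) * ∫⁻ x in {x : Fin n → ℝ | StrictMono x}, f x := by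
  let e : Equiv.Perm (Fin n) → (Fin n → ℝ) ≃ᵐ (Fin n → ℝ) := fun σ =>
    MeasurableEquiv.piCongrLeft (fun _ => ℝ) σ.symm
  have hap : ∀ σ x, e σ x = x ∘ σ := by
    intro σ x
    ext i
    have := Equiv.piCongrLeft_apply_apply (fun _ => ℝ) σ.symm x (σ i)
    simpa [e, MeasurableEquiv.coe_piCongrLeft] using this
  rw [lintegral_decomp e (fun σ => volume_measurePreserving_piCongrLeft _ _)
    (measurableSet_strictMono n)]
  · have : ∀ σ x, f ((e σ).symm x) = f x := by
      intro σ x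
      rw [← hf σ, ← hap, MeasurableEquiv.apply_symm_apply]
    simp [this, Fintype.card_perm]
  · intro σ τ x h1 h2
    rw [hap] at h1 h2
    have h1' : StrictMono (x ∘ σ) := h1
    have h2' : StrictMono (x ∘ τ) := h2
    have h3 := Tuple.unique_monotone h1'.monotone h2'.monotone
    have hx : Function.Injective x := by
      have := h1'.injective.comp σ.symm.injective
      convert this using 1
      ext; simp
    ext i
    have := congrFun h3 i
    rw [hx this]
  · filter_upwards [ae_injective n] with x hx
    refine ⟨Tuple.sort x, ?_⟩
    rw [hap]
    exact (Tuple.monotone_sort x).strictMono_of_injective (hx.comp (Tuple.sort x).injective)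

/-- Real value of a sign. -/
noncomputable def sg (e : ℤˣ) : ℝ := ((e : ℤ) : ℝ)

lemma sg_cases (e : ℤˣ) : sg e = 1 ∨ sg e = -1 := by
  rcases Int.units_eq_one_or e with h | h <;> simp [sg, h]

lemma sg_mul_self (e : ℤˣ) : sg e * sg e = 1 := by
  rcases sg_cases e with h | h <;> rw [h] <;> norm_num

lemma lintegral_sign {n : ℕ} (f : (Fin n → ℝ) → ENNReal) :
    ∫⁻ x, f x = ∑ ε : Fin n → ℤˣ, ∫⁻ x in {x : Fin n → ℝ | ∀ i, 0 < x i},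
      f (fun i => sg (ε i) * x i) := by
  have hmp : ∀ ε : Fin n → ℤˣ, MeasurePreserving
      (fun (x : Fin n → ℝ) i => sg (ε i) * x i) volume volume := by
    intro ε
    refine volume_preserving_pi (f := fun i (y : ℝ) => sg (ε i) * y) fun i => ?_
    rcases sg_cases (ε i) with h | h
    · simp only [h, one_mul]; exact MeasurePreserving.id _
    · simp only [h, neg_one_mul]; exact Measure.measurePreserving_neg _
  let e : (Fin n → ℤˣ) → (Fin n → ℝ) ≃ᵐ (Fin n → ℝ) := fun ε =>
    MeasurableEquiv.ofInvolutive (fun x i => sg (ε i) * x i)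
      (by intro x; ext i; simp only; rw [← mul_assoc, sg_mul_self, one_mul])
      (hmp ε).measurable
  have hD : MeasurableSet {x : Fin n → ℝ | ∀ i, 0 < x i} := by
    rw [Set.ofPred_forall]
    exact MeasurableSet.iInter fun i => measurableSet_lt measurable_const (measurable_pi_apply i)
  rw [lintegral_decomp e (fun ε => hmp ε) hD]
  · rfl
  · intro ε δ x h1 h2
    ext i
    have h1 : 0 < sg (ε i) * x i := h1 i
    have h2 : 0 < sg (δ i) * x i := h2 i
    rcases Int.units_eq_one_or (ε i) with h | h <;> rcases Int.units_eq_one_or (δ i) with h' | h' <;>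
      simp only [h, h', sg] at h1 h2 ⊢ <;> simp at h1 h2 <;> linarith
  · filter_upwards [ae_ne_zero n] with x hx
    refine ⟨fun i => if 0 < x i then 1 else -1, ?_⟩
    intro i
    change 0 < sg (if 0 < x i then 1 else -1) * x i
    split_ifs with h
    · simpa [sg] using h
    · have := lt_of_le_of_ne (not_lt.mp h) (hx i)
      simpa [sg] using this

/-- The Vandermonde product. -/
noncomputable def VV {n : ℕ} (v : Fin n → ℝ) : ℝ := ∏ k, ∏ l ∈ Finset.Iio k, (v k - v l)

lemma VV_eq_det {n : ℕ} (v : Fin n → ℝ) : VV v = (Matrix.vandermonde v).det := by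
  rw [Matrix.det_vandermonde, VV]
  exact Finset.prod_comm' (by simp)

lemma joe_sign_sum {n : ℕ} {t : Fin n → ℝ} (ht : StrictMono t) (h0 : ∀ i, 0 < t i) :
    ∑ ε : Fin n → ℤˣ, ∏ k, ∏ l ∈ Finset.Iio k, |sg (ε k) * t k - sg (ε l) * t l| =
      (Matrix.of fun i j : Fin n =>
        ∑ e : ℤˣ, sg e ^ (i : ℕ) * (sg e * t i) ^ (j : ℕ)).det := by
  have h1 : ∀ ε : Fin n → ℤˣ,
      ∏ k, ∏ l ∈ Finset.Iio k, |sg (ε k) * t k - sg (ε l) * t l| =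
      (Matrix.of fun i j : Fin n => sg (ε i) ^ (i : ℕ) * (sg (ε i) * t i) ^ (j : ℕ)).det := by
    intro ε
    have h2 := Matrix.det_mul_column (fun i : Fin n => sg (ε i) ^ (i : ℕ))
      (Matrix.vandermonde fun i => sg (ε i) * t i)
    simp only [Matrix.vandermonde_apply] at h2
    rw [h2, ← VV_eq_det, VV, ← Finset.prod_mul_distrib]
    refine Finset.prod_congr rfl fun k _ => ?_
    have h3 : sg (ε k) ^ (k : ℕ) = ∏ l ∈ Finset.Iio k, sg (ε k) := by simp
    rw [h3, ← Finset.prod_mul_distrib]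
    refine Finset.prod_congr rfl fun l hl => ?_
    have h4 := ht (Finset.mem_Iio.mp hl)
    have h5 := h0 l
    have h6 := h0 k
    rcases sg_cases (ε k) with h | h <;> rcases sg_cases (ε l) with h' | h' <;> rw [h, h']
    · rw [abs_of_pos] <;> linarith
    · rw [abs_of_pos] <;> linarith
    · rw [abs_of_neg] <;> linarith
    · rw [abs_of_neg] <;> linarith
  simp only [h1]
  have h7 := (Matrix.detRowAlternating (R := ℝ) (n := Fin n)).toMultilinearMap.map_sum
    (α := fun _ => ℤˣ)
    (fun (i : Fin n) e => fun j : Fin n => sg e ^ (i : ℕ) * (sg e * t i) ^ (j : ℕ))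
  have h8 : (fun i : Fin n => ∑ e : ℤˣ, fun j : Fin n => sg e ^ (i : ℕ) * (sg e * t i) ^ (j : ℕ)) =
      fun i j : Fin n => ∑ e : ℤˣ, sg e ^ (i : ℕ) * (sg e * t i) ^ (j : ℕ) := by
    ext i j; simp
  rw [h8] at h7
  exact h7.symm

lemma checker (i j : ℕ) (t : ℝ) : ∑ e : ℤˣ, sg e ^ i * (sg e * t) ^ j =
    if Even (i + j) then 2 * t ^ j else 0 := by
  have : (Finset.univ : Finset ℤˣ) = {1, -1} := rfl
  rw [this, Finset.sum_pair (by decide)]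
  simp only [sg, mul_pow, ← mul_assoc, ← pow_add]
  split_ifs with h
  · simp [h.neg_one_pow]; ring
  · simp [(Nat.not_even_iff_odd.mp h).neg_one_pow]

/-- Index interleaving. -/
def idx (m μ : ℕ) (hμ : μ ≤ 1) : Fin m ⊕ Fin (m + μ) → Fin (2 * m + μ) :=
  Sum.elim (fun i => ⟨2 * i + μ, by omega⟩) (fun i => ⟨2 * i + (1 - μ), by omega⟩)

lemma idx_bij (m μ : ℕ) (hμ : μ ≤ 1) : Function.Bijective (idx m μ hμ) := by
  rw [Fintype.bijective_iff_injective_and_card]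
  refine ⟨?_, by simp; omega⟩
  rintro (i | i) (j | j) h <;> simp [idx] at h ⊢ <;> omega

/-- Index interleaving, as an equivalence. -/
noncomputable def eIdx (m μ : ℕ) (hμ : μ ≤ 1) : Fin m ⊕ Fin (m + μ) ≃ Fin (2 * m + μ) :=
  Equiv.ofBijective _ (idx_bij m μ hμ)

lemma eIdx_inl (m μ : ℕ) (hμ : μ ≤ 1) (i : Fin m) :
    (eIdx m μ hμ (Sum.inl i) : ℕ) = 2 * i + μ := rfl

lemma eIdx_inr (m μ : ℕ) (hμ : μ ≤ 1) (i : Fin (m + μ)) :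
    (eIdx m μ hμ (Sum.inr i) : ℕ) = 2 * i + (1 - μ) := rfl

lemma det_pow_scaled {n : ℕ} (v : Fin n → ℝ) (c : ℕ) :
    (Matrix.of fun i j : Fin n => 2 * v i ^ (2 * (j : ℕ) + c)).det =
      2 ^ n * ((∏ i, v i ^ c) * VV fun i => v i ^ 2) := by
  have h2 := Matrix.det_mul_column (fun i : Fin n => 2 * v i ^ c)
      (Matrix.vandermonde fun i => v i ^ 2)
  have h3 : (Matrix.of fun i j : Fin n => 2 * v i ^ (2 * (j : ℕ) + c)) =
      Matrix.of fun i j : Fin n => (2 * v i ^ c) * Matrix.vandermonde (fun i => v i ^ 2) i j := by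
    ext i j
    simp only [Matrix.of_apply, Matrix.vandermonde_apply]
    rw [pow_add, pow_mul]; ring
  rw [h3, h2, VV_eq_det, Finset.prod_mul_distrib]
  simp [mul_assoc]

lemma det_checker (m μ : ℕ) (hμ : μ ≤ 1) (t : Fin (2 * m + μ) → ℝ) :
    (Matrix.of fun i j : Fin (2 * m + μ) =>
        ∑ e : ℤˣ, sg e ^ (i : ℕ) * (sg e * t i) ^ (j : ℕ)).det =
    2 ^ (2 * m + μ) *
     (((∏ i, t (eIdx m μ hμ (Sum.inl i)) ^ μ) * VV fun i => t (eIdx m μ hμ (Sum.inl i)) ^ 2) *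
      ((∏ i, t (eIdx m μ hμ (Sum.inr i)) ^ (1 - μ)) *
        VV fun i => t (eIdx m μ hμ (Sum.inr i)) ^ 2)) := by
  rw [← Matrix.det_submatrix_equiv_self (eIdx m μ hμ)]
  have : (Matrix.of fun i j : Fin (2 * m + μ) =>
        ∑ e : ℤˣ, sg e ^ (i : ℕ) * (sg e * t i) ^ (j : ℕ)).submatrix (eIdx m μ hμ) (eIdx m μ hμ) =
      Matrix.fromBlocks
        (Matrix.of fun i j : Fin m => 2 * t (eIdx m μ hμ (Sum.inl i)) ^ (2 * (j : ℕ) + μ)) 0 0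
        (Matrix.of fun i j : Fin (m + μ) =>
          2 * t (eIdx m μ hμ (Sum.inr i)) ^ (2 * (j : ℕ) + (1 - μ))) := by
    ext i j
    rcases i with i | i <;> rcases j with j | j
    · have h : Even (2 * (i : ℕ) + μ + (2 * (j : ℕ) + μ)) := ⟨i + j + μ, by ring⟩
      have := checker (2 * i + μ) (2 * j + μ) (t (eIdx m μ hμ (Sum.inl i)))
      rw [if_pos h] at this
      exact this
    · have h : ¬ Even (2 * (i : ℕ) + μ + (2 * (j : ℕ) + (1 - μ))) := by
        rw [Nat.even_iff]; omega
      have := checker (2 * i + μ) (2 * j + (1 - μ)) (t (eIdx m μ hμ (Sum.inl i)))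
      rw [if_neg h] at this
      exact this
    · have h : ¬ Even (2 * (i : ℕ) + (1 - μ) + (2 * (j : ℕ) + μ)) := by
        rw [Nat.even_iff]; omega
      have := checker (2 * i + (1 - μ)) (2 * j + μ) (t (eIdx m μ hμ (Sum.inr i)))
      rw [if_neg h] at this
      exact this
    · have h : Even (2 * (i : ℕ) + (1 - μ) + (2 * (j : ℕ) + (1 - μ))) :=
        ⟨i + j + (1 - μ), by ring⟩
      have := checker (2 * i + (1 - μ)) (2 * j + (1 - μ)) (t (eIdx m μ hμ (Sum.inr i)))
      rw [if_pos h] at this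
      exact this
  rw [this, Matrix.det_fromBlocks_zero₂₁, det_pow_scaled, det_pow_scaled]
  have h2 : (2 : ℝ) ^ (2 * m + μ) = 2 ^ m * 2 ^ (m + μ) := by
    rw [← pow_add]; congr 1; ring
  rw [h2]
  ring

lemma intervalIntegrable_w01 {a : ℝ} (ha : -1 < a) :
    IntervalIntegrable (fun u : ℝ => (1 - u ^ 2) ^ a) volume 0 1 := by
  have h1 : IntervalIntegrable (fun u : ℝ => (1 - u) ^ a) volume 0 1 := by
    have := (intervalIntegral.intervalIntegrable_rpow' (a := 0) (b := 1) ha).comp_sub_left 1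
    simpa using this.symm
  have h2 : ContinuousOn (fun u : ℝ => (1 + u) ^ a) (Set.uIcc 0 1) := by
    refine ContinuousOn.rpow_const (by fun_prop) ?_
    intro x hx
    rw [Set.uIcc_of_le zero_le_one] at hx
    left
    linarith [hx.1]
  refine (h1.mul_continuousOn h2).congr_uIoo ?_
  intro x hx
  rw [Set.uIoo_of_le zero_le_one] at hx
  simp only
  rw [← Real.mul_rpow (by linarith [hx.2]) (by linarith [hx.1])]
  congr 1; ring

lemma intervalIntegrable_w {a : ℝ} (ha : -1 < a) :
    IntervalIntegrable (fun u : ℝ => (1 - u ^ 2) ^ a) volume (-1) 1 := by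
  have h := intervalIntegrable_w01 ha
  refine IntervalIntegrable.trans (b := 0) ?_ h
  have := h.comp_sub_left 0
  simpa using this.symm

lemma intervalIntegrable_pw {a : ℝ} (ha : -1 < a) (e : ℕ) {x y : ℝ}
    (hx : x ∈ Set.Icc (-1 : ℝ) 1) (hy : y ∈ Set.Icc (-1 : ℝ) 1) :
    IntervalIntegrable (fun u : ℝ => u ^ e * (1 - u ^ 2) ^ a) volume x y := by
  have h := (intervalIntegrable_w ha).continuousOn_mul
    (g := fun u : ℝ => u ^ e) (by fun_prop)
  refine h.mono_set ?_
  rw [Set.uIcc_of_le (show (-1 : ℝ) ≤ 1 by norm_num)]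
  exact Set.uIcc_subset_Icc hx hy

/-- Incomplete one-dimensional moments. -/
noncomputable def Iw (a : ℝ) (e : ℕ) (l : ℝ) : ℝ := ∫ u in l..1, u ^ e * (1 - u ^ 2) ^ a

lemma Iw_rec {a : ℝ} (ha : -1 < a) (d : ℕ) {l : ℝ} (h0 : 0 ≤ l) (h1 : l ≤ 1) :
    (d + 2 * a + 2) * Iw a (d + 1) l = l ^ d * (1 - l ^ 2) ^ (a + 1) + d * Iw a (d - 1) l := by
  have hl : l ∈ Set.Icc (-1 : ℝ) 1 := ⟨by linarith, h1⟩
  have hr : (1 : ℝ) ∈ Set.Icc (-1 : ℝ) 1 := ⟨by norm_num, le_rfl⟩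
  have hIntg : ∀ e, IntervalIntegrable (fun u : ℝ => u ^ e * (1 - u ^ 2) ^ a) volume l 1 :=
    fun e => intervalIntegrable_pw ha e hl hr
  have key := intervalIntegral.integral_eq_sub_of_hasDerivAt_of_le (a := l) (b := 1)
    (f := fun u : ℝ => u ^ d * (1 - u ^ 2) ^ (a + 1))
    (f' := fun u : ℝ => d * (u ^ (d - 1) * (1 - u ^ 2) ^ a) -
      (d + 2 * a + 2) * (u ^ (d + 1) * (1 - u ^ 2) ^ a)) h1 ?_ ?_ ?_
  · rw [intervalIntegral.integral_sub ((hIntg _).const_mul _) ((hIntg _).const_mul _),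
      intervalIntegral.integral_const_mul, intervalIntegral.integral_const_mul] at key
    have hz : (1 - (1 : ℝ) ^ 2) ^ (a + 1) = 0 := by
      norm_num
      rw [Real.zero_rpow]; linarith
    rw [hz] at key
    unfold Iw
    linarith
  · refine ContinuousOn.mul (by fun_prop) ?_
    refine ContinuousOn.rpow_const (by fun_prop) ?_
    intro x _
    right; linarith
  · intro x hx
    have hx1 : 0 < 1 - x ^ 2 := by nlinarith [hx.1, hx.2]
    have hd := (hasDerivAt_pow d x).mul
      (((hasDerivAt_pow 2 x).const_sub 1).rpow_const (p := a + 1) (Or.inl hx1.ne'))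
    refine hd.congr_deriv ?_
    have e1 : (1 - x ^ 2) ^ (a + 1) = (1 - x ^ 2) * (1 - x ^ 2) ^ a := by
      rw [Real.rpow_add hx1, Real.rpow_one, mul_comm]
    rw [e1, add_sub_cancel_right]
    rcases d with _ | d
    · simp; ring
    · simp only [Nat.add_sub_cancel]; push_cast; ring
  · exact ((hIntg _).const_mul _).sub ((hIntg _).const_mul _)

lemma det_integral {N : ℕ} (ν : Fin N → Measure ℝ) [∀ i, SigmaFinite (ν i)]
    (f : Fin N → ℝ → ℝ) (hf : ∀ i j, Integrable (f j) (ν i)) :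
    Integrable (fun q : Fin N → ℝ => (Matrix.of fun i j => f j (q i)).det) (Measure.pi ν) ∧
    ∫ q, (Matrix.of fun i j => f j (q i)).det ∂(Measure.pi ν) =
      (Matrix.of fun i j => ∫ u, f j u ∂(ν i)).det := by
  have hdet : ∀ M : Matrix (Fin N) (Fin N) ℝ, M.det =
      ∑ σ : Equiv.Perm (Fin N), ((Equiv.Perm.sign σ : ℤ) : ℝ) * ∏ i, M i (σ i) := by
    intro M
    rw [← Matrix.det_transpose, Matrix.det_apply']
    rfl
  simp only [hdet, Matrix.of_apply]
  have hi : ∀ σ : Equiv.Perm (Fin N), Integrable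
      (fun q : Fin N → ℝ => ((Equiv.Perm.sign σ : ℤ) : ℝ) * ∏ i, f (σ i) (q i))
      (Measure.pi ν) := by
    intro σ
    exact (Integrable.fintype_prod (f := fun i => f (σ i)) fun i => hf i (σ i)).const_mul _
  refine ⟨integrable_finsetSum _ fun σ _ => hi σ, ?_⟩
  rw [integral_finsetSum _ fun σ _ => hi σ]
  refine Finset.sum_congr rfl fun σ _ => ?_
  rw [integral_const_mul, integral_fintype_prod_eq_prod (fun i => f (σ i))]

/-- Upper end points of the interlacing box. -/
noncomputable def up {N : ℕ} (l : Fin N → ℝ) (i : Fin N) : ℝ :=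
  if h : (i : ℕ) + 1 < N then l ⟨i + 1, h⟩ else 1

lemma lt_up {N : ℕ} {l : Fin N → ℝ} (hl : StrictMono l) (h1 : ∀ i, l i < 1) (i : Fin N) :
    l i < up l i := by
  unfold up
  split_ifs with h
  · exact hl (by simp [Fin.lt_def])
  · exact h1 i

lemma up_le_one {N : ℕ} {l : Fin N → ℝ} (h1 : ∀ i, l i < 1) (i : Fin N) :
    up l i ≤ 1 := by
  unfold up
  split_ifs with h
  · exact (h1 _).le
  · exact le_rfl

lemma det_rows {N : ℕ} (K M : Matrix (Fin N) (Fin N) ℝ)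
    (hKM : ∀ i j, M i j = K i j - if h : (i : ℕ) + 1 < N then K ⟨i + 1, h⟩ j else 0) :
    M.det = K.det := by
  rcases N with _ | N
  · simp
  rw [← Matrix.det_submatrix_equiv_self Fin.revPerm M,
    ← Matrix.det_submatrix_equiv_self Fin.revPerm K]
  symm
  refine Matrix.det_eq_of_forall_row_eq_smul_add_pred (fun _ => 1) ?_ ?_
  · intro j
    simp [hKM]
  · intro i j
    simp only [Matrix.submatrix_apply, Fin.revPerm_apply, hKM]
    have h : ((Fin.rev i.succ : Fin (N + 1)) : ℕ) + 1 < N + 1 := by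
      rw [Fin.val_rev, Fin.val_succ]; omega
    rw [dif_pos h]
    have : (⟨((Fin.rev i.succ : Fin (N + 1)) : ℕ) + 1, h⟩ : Fin (N + 1)) = Fin.rev i.castSucc := by
      ext; simp only [Fin.val_rev, Fin.val_succ, Fin.val_castSucc]; omega
    rw [this]; ring

lemma VV_nonneg {n : ℕ} {v : Fin n → ℝ} (hv : Monotone v) : 0 ≤ VV v := by
  refine Finset.prod_nonneg fun k _ => Finset.prod_nonneg fun l hl => ?_
  exact sub_nonneg.mpr (hv (Finset.mem_Iio.mp hl).le)

lemma box_integral {N : ℕ} {a : ℝ} (ha : -1 < a) (c : ℕ) {l : Fin N → ℝ} (hl : StrictMono l)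
    (h0 : ∀ i, 0 ≤ l i) (h1 : ∀ i, l i < 1) :
    ∫⁻ q in {q : Fin N → ℝ | ∀ i, l i < q i ∧ q i < up l i},
      ENNReal.ofReal ((∏ i, (q i ^ c * (1 - q i ^ 2) ^ a)) * VV fun i => q i ^ 2) =
    ENNReal.ofReal (Matrix.of fun i j : Fin N => Iw a (2 * j + c) (l i)).det := by
  have hset : {q : Fin N → ℝ | ∀ i, l i < q i ∧ q i < up l i} =
      Set.univ.pi fun i => Set.Ioo (l i) (up l i) := by
    ext q; simp
  have hlt := fun i => lt_up hl h1 i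
  have hup := fun i => up_le_one h1 i
  have hmem : ∀ i, l i ∈ Set.Icc (-1 : ℝ) 1 := fun i => ⟨by linarith [h0 i], (h1 i).le⟩
  have humem : ∀ i, up l i ∈ Set.Icc (-1 : ℝ) 1 :=
    fun i => ⟨by linarith [h0 i, hlt i], hup i⟩
  have hIntg : ∀ (i : Fin N) (j : Fin N), Integrable
      (fun u : ℝ => u ^ (2 * (j : ℕ) + c) * (1 - u ^ 2) ^ a)
      (volume.restrict (Set.Ioo (l i) (up l i))) := by
    intro i j
    have := intervalIntegrable_pw ha (2 * j + c) (hmem i) (humem i)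
    rw [intervalIntegrable_iff_integrableOn_Ioo_of_le (hlt i).le] at this
    exact this
  obtain ⟨hI, hE⟩ := det_integral (fun i => volume.restrict (Set.Ioo (l i) (up l i)))
    (fun j u => u ^ (2 * (j : ℕ) + c) * (1 - u ^ 2) ^ a) hIntg
  have hdet : ∀ q : Fin N → ℝ, (∏ i, (q i ^ c * (1 - q i ^ 2) ^ a)) * VV (fun i => q i ^ 2) =
      (Matrix.of fun i j : Fin N => q i ^ (2 * (j : ℕ) + c) * (1 - q i ^ 2) ^ a).det := by
    intro q
    rw [VV_eq_det, ← Matrix.det_mul_column]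
    congr 1
    ext i j
    simp only [Matrix.of_apply, Matrix.vandermonde_apply]
    rw [pow_add, pow_mul]; ring
  have hvol : (volume : Measure (Fin N → ℝ)).restrict (Set.univ.pi fun i => Set.Ioo (l i) (up l i))
      = Measure.pi fun i => volume.restrict (Set.Ioo (l i) (up l i)) := by
    rw [volume_pi, Measure.restrict_pi_pi]
  rw [hset, hvol]
  have hnn : 0 ≤ᵐ[Measure.pi fun i => volume.restrict (Set.Ioo (l i) (up l i))]
      fun q : Fin N → ℝ => (∏ i, (q i ^ c * (1 - q i ^ 2) ^ a)) * VV (fun i => q i ^ 2) := by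
    rw [← hvol]
    filter_upwards [ae_restrict_mem (MeasurableSet.univ_pi fun i => measurableSet_Ioo)] with q hq
    have hq' : ∀ i, l i < q i ∧ q i < up l i := fun i => hq i (Set.mem_univ i)
    have hq0 : ∀ i, 0 ≤ q i := fun i => by linarith [h0 i, (hq' i).1]
    have hq1 : ∀ i, q i ≤ 1 := fun i => by linarith [hup i, (hq' i).2]
    refine mul_nonneg (Finset.prod_nonneg fun i _ => mul_nonneg (pow_nonneg (hq0 i) _) ?_)
      (VV_nonneg ?_)
    · refine Real.rpow_nonneg ?_ _
      nlinarith [hq0 i, hq1 i]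
    · intro i j hij
      rcases hij.lt_or_eq with h | h
      · refine pow_le_pow_left₀ (hq0 i) ?_ 2
        have h3 : up l i ≤ l j := by
          unfold up
          have : (i : ℕ) + 1 < N := by have := Fin.lt_def.mp h; omega
          rw [dif_pos this]
          exact hl.monotone (by have := Fin.lt_def.mp h; rw [Fin.le_def]; simp; omega)
        linarith [(hq' i).2, (hq' j).1]
      · rw [h]
  rw [← ofReal_integral_eq_lintegral_ofReal (by simpa only [hdet] using hI) hnn]
  simp only [hdet]
  rw [hE]
  congr 1
  apply det_rows
  intro i j
  simp only [Matrix.of_apply]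
  rw [← integral_Ioc_eq_integral_Ioo, ← intervalIntegral.integral_of_le (hlt i).le]
  unfold Iw
  have hr : (1 : ℝ) ∈ Set.Icc (-1 : ℝ) 1 := ⟨by norm_num, le_rfl⟩
  rw [← intervalIntegral.integral_add_adjacent_intervals
    (intervalIntegrable_pw ha _ (hmem i) (humem i)) (intervalIntegrable_pw ha _ (humem i) hr)]
  unfold up
  split_ifs with h <;> simp

/-- Lower end points of the interlacing box. -/
noncomputable def ell {m : ℕ} (μ : ℕ) (p : Fin m → ℝ) (i : Fin (m + μ)) : ℝ :=
  if h : μ ≤ (i : ℕ) then p ⟨i - μ, by omega⟩ else 0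

lemma det_eval0 (m : ℕ) {a : ℝ} (ha : -1 < a) :
    ∃ K : ℝ, 0 ≤ K ∧ ∀ p : Fin (m + 1) → ℝ, (∀ i, 0 < p i ∧ p i < 1) →
      (Matrix.of fun i j : Fin (m + 1) => Iw a (2 * j + 1) (p i)).det =
        K * ((∏ i, (1 - p i ^ 2) ^ (a + 1)) * VV fun i => p i ^ 2) := by
  refine ⟨∏ j : Fin (m + 1), (((2 * (j : ℕ) : ℕ) : ℝ) + 2 * a + 2)⁻¹, ?_, ?_⟩
  · refine Finset.prod_nonneg fun j _ => inv_nonneg.mpr ?_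
    have : (0 : ℝ) ≤ ((2 * (j : ℕ) : ℕ) : ℝ) := Nat.cast_nonneg _
    linarith
  intro p hp
  rw [VV_eq_det, ← Matrix.det_mul_column, ← Matrix.det_mul_row]
  refine Matrix.det_eq_of_forall_col_eq_smul_add_pred
    (fun j => ((2 * ((j : ℕ) + 1) : ℕ) : ℝ) * (((2 * ((j : ℕ) + 1) : ℕ) : ℝ) + 2 * a + 2)⁻¹) ?_ ?_
  · intro i
    have h := Iw_rec ha 0 (hp i).1.le (hp i).2.le
    have hne : (2 * a + 2) ≠ 0 := by linarith
    simp at h ⊢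
    rw [← h, ← mul_assoc, inv_mul_cancel₀ hne, one_mul]
  · intro i j
    have h := Iw_rec ha (2 * (j + 1)) (hp i).1.le (hp i).2.le
    have h2 : (0 : ℝ) ≤ ((2 * ((j : ℕ) + 1) : ℕ) : ℝ) := Nat.cast_nonneg _
    have hne : (((2 * ((j : ℕ) + 1) : ℕ) : ℝ) + 2 * a + 2) ≠ 0 := by linarith
    have e2 : 2 * ((j : ℕ) + 1) - 1 = 2 * j + 1 := by omega
    rw [e2] at h
    simp only [Matrix.of_apply, Matrix.vandermonde_apply, Fin.val_succ, Fin.val_castSucc]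
    rw [← pow_mul]
    set D := (((2 * ((j : ℕ) + 1) : ℕ) : ℝ) + 2 * a + 2) with hD
    rw [eq_comm, ← mul_right_inj' hne, h, mul_add]
    have : ∀ x y : ℝ, D * (D⁻¹ * x) = x ∧ D * (y * D⁻¹ * x) = y * x := by
      intro x y; constructor <;> field_simp
    rw [(this _ 0).1, (this _ _).2]; ring

lemma det_eval1 (m : ℕ) {a : ℝ} (ha : -1 < a) :
    ∃ K : ℝ, 0 ≤ K ∧ ∀ (p : Fin m → ℝ), (∀ i, 0 < p i ∧ p i < 1) →
      (Matrix.of fun i j : Fin (m + 1) => Iw a (2 * j) (ell 1 p i)).det =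
        K * ((∏ i, p i * (1 - p i ^ 2) ^ (a + 1)) * VV fun i => p i ^ 2) := by
  refine ⟨Iw a 0 0 * ∏ j : Fin m, (((2 * (j : ℕ) + 1 : ℕ) : ℝ) + 2 * a + 2)⁻¹, ?_, ?_⟩
  · refine mul_nonneg ?_ (Finset.prod_nonneg fun j _ => inv_nonneg.mpr ?_)
    · refine intervalIntegral.integral_nonneg zero_le_one fun u hu => ?_
      refine mul_nonneg (pow_nonneg hu.1 _) (Real.rpow_nonneg ?_ _)
      nlinarith [hu.1, hu.2]
    have : (0 : ℝ) ≤ ((2 * (j : ℕ) + 1 : ℕ) : ℝ) := Nat.cast_nonneg _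
    linarith
  intro p hp
  have e0 : ell 1 p 0 = 0 := by simp [ell]
  have e1 : ∀ i : Fin m, ell 1 p i.succ = p i := by intro i; simp [ell]
  have eb : ∀ i : Fin (m + 1), 0 ≤ ell 1 p i ∧ ell 1 p i ≤ 1 := by
    intro i
    refine Fin.cases ?_ (fun i => ?_) i
    · rw [e0]; norm_num
    · rw [e1]; exact ⟨(hp i).1.le, (hp i).2.le⟩
  let B : Matrix (Fin (m + 1)) (Fin (m + 1)) ℝ := Matrix.of fun i j =>
    Fin.cases (motive := fun _ => ℝ) (Iw a 0 (ell 1 p i))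
      (fun j' : Fin m => (((2 * (j' : ℕ) + 1 : ℕ) : ℝ) + 2 * a + 2)⁻¹ *
        (ell 1 p i ^ (2 * (j' : ℕ) + 1) * (1 - ell 1 p i ^ 2) ^ (a + 1))) j
  have hB : (Matrix.of fun i j : Fin (m + 1) => Iw a (2 * j) (ell 1 p i)).det = B.det := by
    refine Matrix.det_eq_of_forall_col_eq_smul_add_pred
      (fun j => ((2 * (j : ℕ) + 1 : ℕ) : ℝ) * (((2 * (j : ℕ) + 1 : ℕ) : ℝ) + 2 * a + 2)⁻¹) ?_ ?_
    · intro i; simp [B]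
    · intro i j
      have h := Iw_rec ha (2 * j + 1) (eb i).1 (eb i).2
      have h2 : (0 : ℝ) ≤ ((2 * (j : ℕ) + 1 : ℕ) : ℝ) := Nat.cast_nonneg _
      have hne : (((2 * (j : ℕ) + 1 : ℕ) : ℝ) + 2 * a + 2) ≠ 0 := by linarith
      have e2 : 2 * (j : ℕ) + 1 - 1 = 2 * j := by omega
      rw [e2] at h
      simp only [Matrix.of_apply, Fin.val_succ, Fin.val_castSucc, B, Fin.cases_succ]
      set D := (((2 * (j : ℕ) + 1 : ℕ) : ℝ) + 2 * a + 2) with hD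
      rw [eq_comm, ← mul_right_inj' hne, show 2 * ((j : ℕ) + 1) = 2 * j + 1 + 1 by ring, h, mul_add]
      have : ∀ x y : ℝ, D * (D⁻¹ * x) = x ∧ D * (y * D⁻¹ * x) = y * x := by
        intro x y; constructor <;> field_simp
      rw [(this _ 0).1, (this _ _).2]
  rw [hB, Matrix.det_succ_row_zero, Fin.sum_univ_succ, Finset.sum_eq_zero]
  · have hsub : B.submatrix Fin.succ (Fin.succAbove 0) =
        Matrix.of fun i j : Fin m => (((2 * (j : ℕ) + 1 : ℕ) : ℝ) + 2 * a + 2)⁻¹ *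
          (Matrix.of fun i j : Fin m => (p i * (1 - p i ^ 2) ^ (a + 1)) *
            Matrix.vandermonde (fun i => p i ^ 2) i j) i j := by
      ext i j
      simp only [B, Matrix.submatrix_apply, Matrix.of_apply, Fin.succAbove_zero, Fin.cases_succ, e1,
        Matrix.vandermonde_apply]
      rw [pow_add, pow_mul]; ring
    rw [hsub, Matrix.det_mul_row, Matrix.det_mul_column, ← VV_eq_det]
    simp only [B, Matrix.of_apply, Fin.cases_zero, e0]
    simp [mul_assoc]
  · intro j _
    simp [B, e0]

lemma det_eval (m μ : ℕ) (hμ : μ = 0 ∨ μ = 1) (hm : 1 ≤ m) {a : ℝ} (ha : -1 < a) :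
    ∃ K : ℝ, 0 ≤ K ∧ ∀ (p : Fin m → ℝ), (∀ i, 0 < p i ∧ p i < 1) →
      (Matrix.of fun i j : Fin (m + μ) => Iw a (2 * j + (1 - μ)) (ell μ p i)).det =
        K * ((∏ i, p i ^ μ * (1 - p i ^ 2) ^ (a + 1)) * VV fun i => p i ^ 2) := by
  rcases hμ with rfl | rfl
  · obtain ⟨m, rfl⟩ : ∃ m', m = m' + 1 := ⟨m - 1, by omega⟩
    obtain ⟨K, hK, h⟩ := det_eval0 m ha
    refine ⟨K, hK, fun p hp => ?_⟩
    simpa [ell] using h p hp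
  · obtain ⟨K, hK, h⟩ := det_eval1 m ha
    refine ⟨K, hK, fun p hp => ?_⟩
    simpa using h p hp

lemma strictMono_of_adj {n : ℕ} {t : Fin n → ℝ}
    (h : ∀ (k : ℕ) (hk : k + 1 < n), t ⟨k, by omega⟩ < t ⟨k + 1, hk⟩) : StrictMono t := by
  rcases n with _ | n
  · intro i; exact i.elim0
  rw [Fin.strictMono_iff_lt_succ]
  intro i
  exact h i (by omega)

lemma ell_strictMono {m μ : ℕ} (hμ : μ ≤ 1) {p : Fin m → ℝ} (hp : StrictMono p)
    (h : ∀ i, 0 < p i ∧ p i < 1) : StrictMono (ell μ p) := by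
  apply strictMono_of_adj
  intro k hk
  unfold ell
  simp only
  rw [dif_pos (show μ ≤ k + 1 by omega)]
  split_ifs with h1
  · apply hp; rw [Fin.lt_def]; simp only; omega
  · exact (h _).1

lemma ell_nonneg {m μ : ℕ} {p : Fin m → ℝ}
    (h : ∀ i, 0 < p i ∧ p i < 1) (i) : 0 ≤ ell μ p i := by
  unfold ell; split_ifs
  · exact (h _).1.le
  · exact le_rfl

lemma ell_lt_one {m μ : ℕ} {p : Fin m → ℝ}
    (h : ∀ i, 0 < p i ∧ p i < 1) (i) : ell μ p i < 1 := by
  unfold ell; split_ifs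
  · exact (h _).2
  · exact one_pos

lemma interlace_iff (m μ : ℕ) (hμ : μ ≤ 1) (t : Fin (2 * m + μ) → ℝ) (p : Fin m → ℝ)
    (q : Fin (m + μ) → ℝ) (hp : ∀ i, t (eIdx m μ hμ (Sum.inl i)) = p i)
    (hq : ∀ i, t (eIdx m μ hμ (Sum.inr i)) = q i) :
    (StrictMono t ∧ ∀ i, 0 < t i ∧ t i < 1) ↔
      (StrictMono p ∧ ∀ i, 0 < p i ∧ p i < 1) ∧ ∀ i, ell μ p i < q i ∧ q i < up (ell μ p) i := by
  constructor
  · rintro ⟨ht, hb⟩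
    refine ⟨⟨?_, fun i => ?_⟩, fun i => ⟨?_, ?_⟩⟩
    · intro i j hij
      rw [← hp, ← hp]
      apply ht
      rw [Fin.lt_def, eIdx_inl, eIdx_inl]
      have := Fin.lt_def.mp hij
      omega
    · rw [← hp]; exact hb _
    · unfold ell; rw [← hq]
      split_ifs with h
      · rw [← hp]; apply ht; rw [Fin.lt_def, eIdx_inl, eIdx_inr]; simp only; omega
      · exact (hb _).1
    · unfold up; rw [← hq]
      split_ifs with h
      · unfold ell
        simp only
        rw [dif_pos (show μ ≤ (i : ℕ) + 1 by omega), ← hp]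
        apply ht; rw [Fin.lt_def, eIdx_inl, eIdx_inr]; simp only; omega
      · exact (hb _).2
  · rintro ⟨⟨hpm, hpb⟩, hqb⟩
    constructor
    · apply strictMono_of_adj
      intro k hk
      by_cases hpar : μ ≤ k ∧ (k - μ) % 2 = 0
      · have h1 : (⟨k, by omega⟩ : Fin (2 * m + μ)) =
            eIdx m μ hμ (Sum.inl ⟨(k - μ) / 2, by omega⟩) := by
          ext; rw [eIdx_inl]; simp only; omega
        have h2 : (⟨k + 1, hk⟩ : Fin (2 * m + μ)) =
            eIdx m μ hμ (Sum.inr ⟨(k - μ) / 2 + μ, by omega⟩) := by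
          ext; rw [eIdx_inr]; simp only; omega
        rw [h1, h2, hp, hq]
        refine lt_of_eq_of_lt ?_ (hqb _).1
        unfold ell
        simp
      · have h1 : (⟨k, by omega⟩ : Fin (2 * m + μ)) =
            eIdx m μ hμ (Sum.inr ⟨k / 2, by omega⟩) := by
          ext; rw [eIdx_inr]; simp only; omega
        have h2 : (⟨k + 1, hk⟩ : Fin (2 * m + μ)) =
            eIdx m μ hμ (Sum.inl ⟨k / 2 + 1 - μ, by omega⟩) := by
          ext; rw [eIdx_inl]; simp only; omega
        rw [h1, h2, hp, hq]
        refine lt_of_lt_of_eq (hqb _).2 ?_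
        unfold up ell
        simp only
        rw [dif_pos (show k / 2 + 1 < m + μ by omega), dif_pos (show μ ≤ k / 2 + 1 by omega)]
    · intro i
      obtain ⟨j, rfl⟩ := (eIdx m μ hμ).surjective i
      rcases j with j | j
      · rw [hp]; exact hpb j
      · rw [hq]
        exact ⟨(ell_nonneg hpb j).trans_lt (hqb j).1,
          (hqb j).2.trans_le (up_le_one (ell_lt_one hpb) j)⟩

lemma lt_card_iff {n : ℕ} {t : Fin n → ℝ} (ht : StrictMono t) (s : ℝ) (i : Fin n) :
    t i < s ↔ (i : ℕ) < (Finset.univ.filter fun i => t i < s).card := by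
  constructor
  · intro h
    have : Finset.Iic i ⊆ Finset.univ.filter fun i => t i < s := by
      intro j hj
      simp only [Finset.mem_filter, Finset.mem_univ, true_and]
      exact (ht.monotone (Finset.mem_Iic.mp hj)).trans_lt h
    have := Finset.card_le_card this
    simp at this
    omega
  · contrapose!
    intro h
    have : (Finset.univ.filter fun i => t i < s) ⊆ Finset.Iio i := by
      intro j hj
      simp only [Finset.mem_filter, Finset.mem_univ, true_and] at hj
      exact Finset.mem_Iio.mpr (ht.lt_iff_lt.mp (hj.trans_le h))
    have := Finset.card_le_card this
    simpa using this

lemma count_half (m μ : ℕ) (hμ : μ ≤ 1) {t : Fin (2 * m + μ) → ℝ} (ht : StrictMono t) (s : ℝ)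
    (p : Fin m → ℝ) (hp : ∀ i, t (eIdx m μ hμ (Sum.inl i)) = p i) :
    (Finset.univ.filter fun i => p i < s).card =
      ((Finset.univ.filter fun i => t i < s).card + 1 - μ) / 2 := by
  have hN : (Finset.univ.filter fun i => t i < s).card ≤ 2 * m + μ := by
    simpa using Finset.card_le_univ (Finset.univ.filter fun i => t i < s)
  set N := (Finset.univ.filter fun i => t i < s).card with hNdef
  have h1 : (Finset.univ.filter fun i => p i < s) =
      Finset.univ.filter fun i : Fin m => (i : ℕ) < (N + 1 - μ) / 2 := by
    ext i
    simp only [Finset.mem_filter, Finset.mem_univ, true_and]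
    rw [← hp, lt_card_iff ht, ← hNdef, eIdx_inl]
    omega
  rw [h1, Fin.card_filter_val_lt]
  omega

/-- Ordered points in `(0,1)`. -/
def S01 (n : ℕ) : Set (Fin n → ℝ) := {t | StrictMono t ∧ ∀ i, 0 < t i ∧ t i < 1}

/-- Counting function. -/
noncomputable def cnt {n : ℕ} (s : ℝ) (t : Fin n → ℝ) : ℕ :=
  (Finset.univ.filter fun i => t i < s).card

lemma measurable_cnt {n : ℕ} (s : ℝ) : Measurable (cnt s : (Fin n → ℝ) → ℕ) := by
  unfold cnt
  simp only [Finset.card_filter]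
  refine Finset.measurable_sum _ fun i _ => ?_
  exact Measurable.ite (measurableSet_lt (measurable_pi_apply i) measurable_const)
    measurable_const measurable_const

lemma measurableSet_box {n : ℕ} (b c : ℝ) :
    MeasurableSet {x : Fin n → ℝ | ∀ i, b < x i ∧ x i < c} := by
  rw [Set.ofPred_forall]
  refine MeasurableSet.iInter fun i => ?_
  exact (measurableSet_lt measurable_const (measurable_pi_apply i)).inter
    (measurableSet_lt (measurable_pi_apply i) measurable_const)

lemma measurableSet_S01 (n : ℕ) : MeasurableSet (S01 n) :=
  (measurableSet_strictMono n).inter (measurableSet_box 0 1)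

lemma cnt_perm {n : ℕ} (s : ℝ) (t : Fin n → ℝ) (σ : Equiv.Perm (Fin n)) :
    cnt s (t ∘ σ) = cnt s t := by
  unfold cnt
  refine Finset.card_bij (fun i _ => σ i) ?_ ?_ ?_
  · intro i hi; simpa using hi
  · intro i _ j _ h; exact σ.injective h
  · intro j hj; exact ⟨σ.symm j, by simpa using hj, by simp⟩

lemma abs_VV_perm {n : ℕ} (t : Fin n → ℝ) (σ : Equiv.Perm (Fin n)) :
    |VV (t ∘ σ)| = |VV t| := by
  have : Matrix.vandermonde (t ∘ σ) = (Matrix.vandermonde t).submatrix σ id := by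
    ext i j; simp [Matrix.vandermonde_apply]
  rw [VV_eq_det, VV_eq_det, this, Matrix.det_permute, abs_mul]
  rcases Int.units_eq_one_or (Equiv.Perm.sign σ) with h | h <;> simp [h]

lemma prod_abs_eq {n : ℕ} (t : Fin n → ℝ) :
    ∏ k, ∏ l ∈ Finset.Iio k, |t k - t l| = |VV t| := by
  simp [VV, Finset.abs_prod]

lemma joeTotal_eq {n : ℕ} (a : ℝ) (x : Fin n → ℝ) :
    joeTotalIntegrand n a x = (∏ i, (1 - (x i) ^ 2) ^ a) * |VV x| := by
  rw [joeTotalIntegrand, prod_abs_eq]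

lemma measurable_joeTotal (n : ℕ) (a : ℝ) : Measurable (joeTotalIntegrand n a) := by
  unfold joeTotalIntegrand
  fun_prop

lemma joeTotal_perm {n : ℕ} (a : ℝ) (x : Fin n → ℝ) (σ : Equiv.Perm (Fin n)) :
    joeTotalIntegrand n a (x ∘ σ) = joeTotalIntegrand n a x := by
  rw [joeTotal_eq, joeTotal_eq, abs_VV_perm]
  congr 1
  exact Equiv.prod_comp σ fun i => (1 - (x i) ^ 2) ^ a

/-- The checkerboard matrix. -/
noncomputable def MM {n : ℕ} (t : Fin n → ℝ) : Matrix (Fin n) (Fin n) ℝ :=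
  Matrix.of fun i j : Fin n => ∑ e : ℤˣ, sg e ^ (i : ℕ) * (sg e * t i) ^ (j : ℕ)

lemma joe_reduce (n : ℕ) (a s : ℝ) (χ : ℕ → ENNReal) :
    ∫⁻ x in {x : Fin n → ℝ | ∀ i, -1 < x i ∧ x i < 1},
      χ (cnt s fun i => |x i|) * ENNReal.ofReal (joeTotalIntegrand n a x) =
    (n.factorial : ENNReal) * ∫⁻ t in S01 n,
      χ (cnt s t) * ENNReal.ofReal ((∏ i, (1 - (t i) ^ 2) ^ a) * (MM t).det) := by
  set cube : Set (Fin n → ℝ) := {x : Fin n → ℝ | ∀ i, -1 < x i ∧ x i < 1} with hcube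
  have hcm : MeasurableSet cube := measurableSet_box (-1) 1
  set F : (Fin n → ℝ) → ENNReal := cube.indicator fun x =>
      χ (cnt s fun i => |x i|) * ENNReal.ofReal (joeTotalIntegrand n a x) with hF
  have hFm : Measurable F := by
    refine Measurable.indicator ?_ hcm
    refine Measurable.mul ?_ (measurable_joeTotal n a).ennreal_ofReal
    refine (measurable_from_nat (f := χ)).comp ((measurable_cnt s).comp ?_)
    fun_prop
  have hFs : ∀ (σ : Equiv.Perm (Fin n)) x, F (x ∘ σ) = F x := by
    intro σ x
    have h1 : x ∘ σ ∈ cube ↔ x ∈ cube := by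
      constructor
      · intro h i
        have := h (σ.symm i)
        simpa using this
      · intro h i; exact h (σ i)
    have h2 : (cnt s fun i => |(x ∘ σ) i|) = cnt s fun i => |x i| :=
      cnt_perm s (fun i => |x i|) σ
    by_cases hx : x ∈ cube
    · rw [hF, Set.indicator_of_mem hx, Set.indicator_of_mem (h1.mpr hx), h2, joeTotal_perm]
    · rw [hF, Set.indicator_of_notMem hx, Set.indicator_of_notMem (fun h => hx (h1.mp h))]
  set pos : Set (Fin n → ℝ) := {x : Fin n → ℝ | ∀ i, 0 < x i} with hpos
  have hpm : MeasurableSet pos := by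
    rw [hpos, Set.ofPred_forall]
    exact MeasurableSet.iInter fun i => measurableSet_lt measurable_const (measurable_pi_apply i)
  rw [← lintegral_indicator hcm, ← hF, lintegral_sign, ← lintegral_finsetSum, ← lintegral_indicator hpm,
    lintegral_sort, ← lintegral_indicator (measurableSet_strictMono n),
    ← lintegral_indicator (measurableSet_S01 n)]
  · congr 1
    refine lintegral_congr fun t => ?_
    by_cases h1 : StrictMono t
    swap
    · rw [Set.indicator_of_notMem (by exact h1), Set.indicator_of_notMem (fun h => h1 h.1)]
    rw [Set.indicator_of_mem (by exact h1)]
    by_cases h2 : t ∈ pos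
    swap
    · rw [Set.indicator_of_notMem h2, Set.indicator_of_notMem]
      exact fun h => h2 fun i => (h.2 i).1
    rw [Set.indicator_of_mem h2]
    have habs : ∀ (ε : Fin n → ℤˣ) i, |sg (ε i) * t i| = t i := by
      intro ε i
      have : 0 < t i := h2 i
      rcases sg_cases (ε i) with h | h <;> rw [h] <;> simp [this.le]
    have hsq : ∀ (ε : Fin n → ℤˣ) i, (sg (ε i) * t i) ^ 2 = t i ^ 2 := by
      intro ε i
      rw [← sq_abs, habs]
    by_cases h3 : ∀ i, t i < 1
    · rw [Set.indicator_of_mem (show t ∈ S01 n from ⟨h1, fun i => ⟨h2 i, h3 i⟩⟩)]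
      have h4 : ∀ ε : Fin n → ℤˣ, F (fun i => sg (ε i) * t i) =
          χ (cnt s t) * ENNReal.ofReal ((∏ i, (1 - (t i) ^ 2) ^ a) *
            ∏ k, ∏ l ∈ Finset.Iio k, |sg (ε k) * t k - sg (ε l) * t l|) := by
        intro ε
        rw [hF, Set.indicator_of_mem]
        · simp only [habs, joeTotalIntegrand, hsq]
        · intro i
          rw [← abs_lt, habs]; exact h3 i
      rw [Finset.sum_congr rfl fun ε _ => h4 ε, ← Finset.mul_sum,
        ← ENNReal.ofReal_sum_of_nonneg, ← Finset.mul_sum, joe_sign_sum h1 h2]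
      · rfl
      · intro ε _
        refine mul_nonneg (Finset.prod_nonneg fun i _ => Real.rpow_nonneg ?_ _)
          (Finset.prod_nonneg fun _ _ => Finset.prod_nonneg fun _ _ => abs_nonneg _)
        have : 0 < t i := h2 i
        nlinarith [h3 i]
    · rw [Set.indicator_of_notMem (show t ∉ S01 n from fun h => h3 fun i => (h.2 i).2)]
      refine Finset.sum_eq_zero fun ε _ => ?_
      rw [hF, Set.indicator_of_notMem]
      intro h
      apply h3
      intro i
      have := abs_lt.mpr (h i)
      rwa [habs] at this
  · intro σ t
    have h1 : t ∘ σ ∈ pos ↔ t ∈ pos := by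
      constructor
      · intro h i
        have := h (σ.symm i)
        simpa using this
      · intro h i; exact h (σ i)
    by_cases hx : t ∈ pos
    · rw [Set.indicator_of_mem hx, Set.indicator_of_mem (h1.mpr hx)]
      rw [← Equiv.sum_comp (Equiv.arrowCongr σ.symm (Equiv.refl ℤˣ))]
      refine Finset.sum_congr rfl fun ε _ => ?_
      exact hFs σ fun i => sg (ε i) * t i
    · rw [Set.indicator_of_notMem hx, Set.indicator_of_notMem (fun h => hx (h1.mp h))]
  · intro ε _
    refine hFm.comp ?_
    fun_prop

/-- Interleaving two families of points. -/
noncomputable def comb (m μ : ℕ) (hμ : μ ≤ 1) (z : (Fin m → ℝ) × (Fin (m + μ) → ℝ)) :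
    Fin (2 * m + μ) → ℝ :=
  fun k => Sum.elim z.1 z.2 ((eIdx m μ hμ).symm k)

lemma comb_mp (m μ : ℕ) (hμ : μ ≤ 1) : MeasurePreserving (comb m μ hμ) volume volume := by
  have h1 := volume_measurePreserving_sumPiEquivProdPi_symm
    (fun _ : Fin m ⊕ Fin (m + μ) => ℝ)
  have h2 := volume_measurePreserving_piCongrLeft (fun _ : Fin (2 * m + μ) => ℝ) (eIdx m μ hμ)
  have h3 := h2.comp h1
  have h4 : comb m μ hμ = (MeasurableEquiv.piCongrLeft (fun _ : Fin (2 * m + μ) => ℝ) (eIdx m μ hμ)) ∘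
      (MeasurableEquiv.sumPiEquivProdPi (fun _ : Fin m ⊕ Fin (m + μ) => ℝ)).symm := by
    ext z k
    obtain ⟨j, rfl⟩ := (eIdx m μ hμ).surjective k
    have := Equiv.piCongrLeft_apply_apply (fun _ : Fin (2 * m + μ) => ℝ) (eIdx m μ hμ)
      ((MeasurableEquiv.sumPiEquivProdPi (fun _ : Fin m ⊕ Fin (m + μ) => ℝ)).symm z) j
    simp only [Function.comp_apply, MeasurableEquiv.coe_piCongrLeft]
    rw [this]
    rcases j with j | j <;> simp [comb] <;> rfl
  rw [h4]
  exact h3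

lemma lintegral_split (m μ : ℕ) (hμ : μ ≤ 1) (G : (Fin (2 * m + μ) → ℝ) → ENNReal)
    (hG : Measurable G) :
    ∫⁻ t, G t = ∫⁻ p, ∫⁻ q, G (comb m μ hμ (p, q)) := by
  rw [← (comb_mp m μ hμ).lintegral_comp hG, Measure.volume_eq_prod, lintegral_prod]
  exact (hG.comp (comb_mp m μ hμ).measurable).aemeasurable

lemma measurable_VV {n : ℕ} : Measurable (VV : (Fin n → ℝ) → ℝ) := by
  unfold VV; fun_prop

lemma measurable_VVsq {n : ℕ} : Measurable (fun v : Fin n → ℝ => VV fun i => v i ^ 2) := by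
  unfold VV; fun_prop

/-- The weight of the ordered unitary ensemble. -/
noncomputable def WW {m : ℕ} (μ : ℕ) (a : ℝ) (p : Fin m → ℝ) : ℝ :=
  (∏ i, p i ^ (2 * μ) * (1 - p i ^ 2) ^ (2 * a + 1)) * (VV fun i => p i ^ 2) ^ 2

lemma measurable_MM {n : ℕ} : Measurable fun t : Fin n → ℝ => (MM t).det := by
  unfold MM
  simp only [Matrix.det_apply', Matrix.of_apply]
  fun_prop

lemma joe_marginal (m μ : ℕ) (hμ : μ = 0 ∨ μ = 1) (hm : 1 ≤ m) {a : ℝ} (ha : -1 < a) (s : ℝ) :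
    ∃ C : ENNReal, ∀ ψ : ℕ → ENNReal,
    ∫⁻ t in S01 (2 * m + μ), ψ ((cnt s t + 1 - μ) / 2) *
      ENNReal.ofReal ((∏ i, (1 - (t i) ^ 2) ^ a) * (MM t).det) =
    C * ∫⁻ p in S01 m, ψ (cnt s p) * ENNReal.ofReal (WW μ a p) := by
  have hμ1 : μ ≤ 1 := by omega
  obtain ⟨K, hK, hdet⟩ := det_eval m μ hμ hm ha
  refine ⟨ENNReal.ofReal (2 ^ (2 * m + μ) * K), fun ψ => ?_⟩
  rw [← lintegral_indicator (measurableSet_S01 _), lintegral_split m μ hμ1,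
    ← lintegral_indicator (measurableSet_S01 _), ← lintegral_const_mul']
  rotate_left
  · exact ENNReal.ofReal_ne_top
  · refine Measurable.indicator ?_ (measurableSet_S01 _)
    refine Measurable.mul ?_ (Measurable.ennreal_ofReal ?_)
    · exact (measurable_from_nat (f := fun N => ψ ((N + 1 - μ) / 2))).comp (measurable_cnt s)
    · refine Measurable.mul ?_ measurable_MM
      fun_prop
  refine lintegral_congr fun p => ?_
  have hl : ∀ q i, comb m μ hμ1 (p, q) (eIdx m μ hμ1 (Sum.inl i)) = p i := by
    intro q i; simp [comb]
  have hr : ∀ q i, comb m μ hμ1 (p, q) (eIdx m μ hμ1 (Sum.inr i)) = q i := by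
    intro q i; simp [comb]
  have hiff := fun q => interlace_iff m μ hμ1 (comb m μ hμ1 (p, q)) p q (hl q) (hr q)
  by_cases hp : p ∈ S01 m
  swap
  · rw [Set.indicator_of_notMem hp, mul_zero]
    refine lintegral_eq_zero_of_ae_eq_zero (Filter.Eventually.of_forall fun q => ?_)
    have hnot : comb m μ hμ1 (p, q) ∉ S01 (2 * m + μ) := fun h => hp ((hiff q).mp h).1
    simp only
    rw [Set.indicator_of_notMem hnot]
    rfl
  rw [Set.indicator_of_mem hp]
  set box : Set (Fin (m + μ) → ℝ) := {q | ∀ i, ell μ p i < q i ∧ q i < up (ell μ p) i} with hbox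
  have hboxm : MeasurableSet box := by
    rw [hbox, Set.ofPred_forall]
    refine MeasurableSet.iInter fun i => ?_
    exact (measurableSet_lt measurable_const (measurable_pi_apply i)).inter
      (measurableSet_lt (measurable_pi_apply i) measurable_const)
  set pw : ℝ := (∏ i, (1 - p i ^ 2) ^ a) * ((∏ i, p i ^ μ) * VV fun i => p i ^ 2) with hpw
  have hpos1 : ∀ i, 0 < 1 - p i ^ 2 := fun i => by nlinarith [(hp.2 i).1, (hp.2 i).2]
  have hVp : 0 ≤ VV fun i => p i ^ 2 := by
    apply VV_nonneg
    intro i j hij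
    exact pow_le_pow_left₀ (hp.2 i).1.le (hp.1.monotone hij) 2
  have hpw0 : 0 ≤ pw := by
    refine mul_nonneg (Finset.prod_nonneg fun i _ => Real.rpow_nonneg (hpos1 i).le _)
      (mul_nonneg (Finset.prod_nonneg fun i _ => pow_nonneg (hp.2 i).1.le _) hVp)
  have hpt : ∀ q, (S01 (2 * m + μ)).indicator (fun t => ψ ((cnt s t + 1 - μ) / 2) *
      ENNReal.ofReal ((∏ i, (1 - (t i) ^ 2) ^ a) * (MM t).det)) (comb m μ hμ1 (p, q)) =
      box.indicator (fun q => (ψ (cnt s p) * ENNReal.ofReal (2 ^ (2 * m + μ) * pw)) *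
        ENNReal.ofReal ((∏ i, (q i ^ (1 - μ) * (1 - q i ^ 2) ^ a)) * VV fun i => q i ^ 2)) q := by
    intro q
    by_cases hq : q ∈ box
    · have ht : comb m μ hμ1 (p, q) ∈ S01 (2 * m + μ) := (hiff q).mpr ⟨hp, hq⟩
      rw [Set.indicator_of_mem hq, Set.indicator_of_mem ht]
      have hc := count_half m μ hμ1 ht.1 s p (hl q)
      rw [cnt, cnt, hc, mul_assoc, ← ENNReal.ofReal_mul (by positivity)]
      congr 2
      rw [MM, det_checker m μ hμ1, ← Equiv.prod_comp (eIdx m μ hμ1), Fintype.prod_sum_type]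
      simp only [hl, hr, Finset.prod_mul_distrib, hpw]
      ring
    · rw [Set.indicator_of_notMem hq, Set.indicator_of_notMem]
      exact fun h => hq ((hiff q).mp h).2
  rw [lintegral_congr hpt, lintegral_indicator hboxm, lintegral_const_mul, hbox,
    box_integral ha (1 - μ) (ell_strictMono hμ1 hp.1 hp.2) (ell_nonneg hp.2) (ell_lt_one hp.2),
    hdet p hp.2, mul_assoc, ← ENNReal.ofReal_mul (by positivity),
    mul_left_comm (ENNReal.ofReal (2 ^ (2 * m + μ) * K)),
    ← ENNReal.ofReal_mul (by positivity)]
  · congr 2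
    rw [hpw, WW]
    have e1 : ∀ i, p i ^ (2 * μ) * (1 - p i ^ 2) ^ (2 * a + 1) =
        ((1 - p i ^ 2) ^ a * p i ^ μ) * (p i ^ μ * (1 - p i ^ 2) ^ (a + 1)) := by
      intro i
      rw [show 2 * a + 1 = a + (a + 1) by ring, Real.rpow_add (hpos1 i), two_mul, pow_add]
      ring
    simp only [e1, Finset.prod_mul_distrib]
    ring
  · refine Measurable.ennreal_ofReal (Measurable.mul ?_ measurable_VVsq)
    fun_prop

lemma lintegral_sq {m : ℕ} (F : (Fin m → ℝ) → ENNReal) :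
    ∫⁻ y in {y : Fin m → ℝ | ∀ i, 0 < y i ∧ y i < 1}, F y =
    ∫⁻ p in {y : Fin m → ℝ | ∀ i, 0 < y i ∧ y i < 1},
      ENNReal.ofReal |∏ i, (2 * p i)| * F (fun i => p i ^ 2) := by
  have himg : (fun (p : Fin m → ℝ) i => p i ^ 2) '' {y : Fin m → ℝ | ∀ i, 0 < y i ∧ y i < 1} =
      {y : Fin m → ℝ | ∀ i, 0 < y i ∧ y i < 1} := by
    ext y
    constructor
    · rintro ⟨p, hp, rfl⟩ i
      exact ⟨pow_pos (hp i).1 2, pow_lt_one₀ (hp i).1.le (hp i).2 two_ne_zero⟩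
    · intro hy
      refine ⟨fun i => √(y i), fun i => ⟨Real.sqrt_pos.mpr (hy i).1, ?_⟩, ?_⟩
      · rw [Real.sqrt_lt' one_pos]; simpa using (hy i).2
      · ext i; exact Real.sq_sqrt (hy i).1.le
  have key := lintegral_image_eq_lintegral_abs_det_fderiv_mul
    (volume : Measure (Fin m → ℝ)) (measurableSet_box (n := m) 0 1)
    (f := fun (p : Fin m → ℝ) i => p i ^ 2)
    (f' := fun p => ContinuousLinearMap.pi fun i =>
      (2 * p i) • (ContinuousLinearMap.proj i : (Fin m → ℝ) →L[ℝ] ℝ)) ?_ ?_ F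
  · rw [himg] at key
    rw [key]
    refine lintegral_congr fun p => ?_
    congr 3
    have h : ((ContinuousLinearMap.pi fun i =>
        (2 * p i) • (ContinuousLinearMap.proj i : (Fin m → ℝ) →L[ℝ] ℝ) :
          (Fin m → ℝ) →L[ℝ] (Fin m → ℝ)) : (Fin m → ℝ) →ₗ[ℝ] (Fin m → ℝ)) =
        Matrix.toLin' (Matrix.diagonal fun i => 2 * p i) := by
      ext v i
      simp [Matrix.toLin'_apply, Matrix.mulVec_diagonal]
    rw [ContinuousLinearMap.det, h, LinearMap.det_toLin', Matrix.det_diagonal]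
  · intro p _
    apply HasFDerivAt.hasFDerivWithinAt
    rw [hasFDerivAt_pi]
    intro i
    have h1 : HasFDerivAt (fun x : Fin m → ℝ => x i)
      (ContinuousLinearMap.proj i : (Fin m → ℝ) →L[ℝ] ℝ) p := hasFDerivAt_apply i p
    have h2 := h1.pow 2
    simpa using h2
  · intro p hp q hq h
    ext i
    have := congrFun h i
    exact (pow_left_inj₀ (hp i).1.le (hq i).1.le two_ne_zero).mp this

lemma jueTotal_eq {m μ : ℕ} (a : ℝ) (y : Fin m → ℝ) :
    jueTotalIntegrand m μ a y =
      (∏ i, (y i) ^ ((μ : ℝ) - 1 / 2) * (1 - y i) ^ (2 * a + 1)) * |VV y| ^ 2 := by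
  rw [jueTotalIntegrand, sq_abs, VV]
  simp [Finset.prod_pow]

lemma jueTotal_perm {m μ : ℕ} (a : ℝ) (x : Fin m → ℝ) (σ : Equiv.Perm (Fin m)) :
    jueTotalIntegrand m μ a (x ∘ σ) = jueTotalIntegrand m μ a x := by
  rw [jueTotal_eq, jueTotal_eq, abs_VV_perm]
  congr 1
  exact Equiv.prod_comp σ fun i => (x i) ^ ((μ : ℝ) - 1 / 2) * (1 - x i) ^ (2 * a + 1)

lemma jue_reduce (m μ : ℕ) (a s : ℝ) (hs : 0 < s) (ψ : ℕ → ENNReal) :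
    ∫⁻ y in {y : Fin m → ℝ | ∀ i, 0 < y i ∧ y i < 1},
      ψ (cnt (s ^ 2) y) * ENNReal.ofReal (jueTotalIntegrand m μ a y) =
    (m.factorial : ENNReal) * (ENNReal.ofReal (2 ^ m) *
      ∫⁻ p in S01 m, ψ (cnt s p) * ENNReal.ofReal (WW μ a p)) := by
  have hcm : MeasurableSet {y : Fin m → ℝ | ∀ i, 0 < y i ∧ y i < 1} := measurableSet_box 0 1
  rw [lintegral_sq, ← lintegral_indicator hcm, lintegral_sort,
    ← lintegral_indicator (measurableSet_strictMono m), ← lintegral_const_mul' _ _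
    ENNReal.ofReal_ne_top, ← lintegral_indicator (measurableSet_S01 m)]
  · congr 1
    refine lintegral_congr fun p => ?_
    by_cases hp : p ∈ S01 m
    · have hp2 : p ∈ {y : Fin m → ℝ | ∀ i, 0 < y i ∧ y i < 1} := hp.2
      rw [Set.indicator_of_mem hp, Set.indicator_of_mem (show p ∈ {x : Fin m → ℝ | StrictMono x} from hp.1),
        Set.indicator_of_mem hp2]
      have hc : cnt (s ^ 2) (fun i => p i ^ 2) = cnt s p := by
        unfold cnt
        congr 1
        ext i
        simp only [Finset.mem_filter, Finset.mem_univ, true_and]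
        exact pow_lt_pow_iff_left₀ (hp.2 i).1.le hs.le two_ne_zero
      rw [hc, mul_left_comm, mul_left_comm (ENNReal.ofReal (2 ^ m)),
        ← ENNReal.ofReal_mul (abs_nonneg _), ← ENNReal.ofReal_mul (by positivity)]
      congr 2
      rw [abs_of_nonneg (Finset.prod_nonneg fun i _ => by linarith [(hp.2 i).1]), jueTotal_eq,
        sq_abs, WW]
      have e : ∀ i, p i ^ (2 * μ) = p i * (p i ^ 2) ^ ((μ : ℝ) - 1 / 2) := by
        intro i
        have h0 := (hp.2 i).1
        rw [← Real.rpow_natCast (p i) 2, ← Real.rpow_mul h0.le, mul_comm (p i), ← Real.rpow_add_one h0.ne',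
          ← Real.rpow_natCast]
        congr 1
        push_cast
        ring
      simp only [e, Finset.prod_mul_distrib]
      simp
      ring
    · rw [Set.indicator_of_notMem hp]
      by_cases h1 : StrictMono p
      · rw [Set.indicator_of_mem (show p ∈ {x : Fin m → ℝ | StrictMono x} from h1),
          Set.indicator_of_notMem]
        exact fun h => hp ⟨h1, h⟩
      · rw [Set.indicator_of_notMem]
        exact h1
  · intro σ x
    have h1 : x ∘ σ ∈ {y : Fin m → ℝ | ∀ i, 0 < y i ∧ y i < 1} ↔
        x ∈ {y : Fin m → ℝ | ∀ i, 0 < y i ∧ y i < 1} := by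
      constructor
      · intro h i
        have := h (σ.symm i)
        simpa using this
      · intro h i; exact h (σ i)
    have e1 : (fun i => (x ∘ σ) i ^ 2) = (fun i => x i ^ 2) ∘ σ := rfl
    have e2 : ∏ i, (2 * (x ∘ σ) i) = ∏ i, (2 * x i) := Equiv.prod_comp σ fun i => 2 * x i
    by_cases hx : x ∈ {y : Fin m → ℝ | ∀ i, 0 < y i ∧ y i < 1}
    · rw [Set.indicator_of_mem hx, Set.indicator_of_mem (h1.mpr hx), e1, e2, cnt_perm,
        jueTotal_perm]
    · rw [Set.indicator_of_notMem hx, Set.indicator_of_notMem (fun h => hx (h1.mp h))]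

lemma main_lint (m μ : ℕ) (hμ : μ = 0 ∨ μ = 1) (hm : 1 ≤ m) {a : ℝ} (ha : -1 < a) (s : ℝ)
    (hs : 0 < s) :
    ∃ C : ENNReal, ∀ ψ : ℕ → ENNReal,
    ∫⁻ x in {x : Fin (2 * m + μ) → ℝ | ∀ i, -1 < x i ∧ x i < 1},
      ψ (((cnt s fun i => |x i|) + 1 - μ) / 2) *
        ENNReal.ofReal (joeTotalIntegrand (2 * m + μ) a x) =
    C * ∫⁻ y in {y : Fin m → ℝ | ∀ i, 0 < y i ∧ y i < 1},
      ψ (cnt (s ^ 2) y) * ENNReal.ofReal (jueTotalIntegrand m μ a y) := by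
  obtain ⟨C, hC⟩ := joe_marginal m μ hμ hm ha s
  set D : ENNReal := (m.factorial : ENNReal) * ENNReal.ofReal (2 ^ m) with hD
  have hD0 : D ≠ 0 := by
    rw [hD]
    refine mul_ne_zero (by exact_mod_cast m.factorial_ne_zero) ?_
    simp
  have hDt : D ≠ ⊤ := ENNReal.mul_ne_top (by simp) ENNReal.ofReal_ne_top
  refine ⟨((2 * m + μ).factorial : ENNReal) * C * D⁻¹, fun ψ => ?_⟩
  rw [joe_reduce (2 * m + μ) a s (fun N => ψ ((N + 1 - μ) / 2)), hC ψ, jue_reduce m μ a s hs ψ,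
    ← mul_assoc (m.factorial : ENNReal), ← hD, mul_assoc _ D⁻¹, ← mul_assoc D⁻¹,
    ENNReal.inv_mul_cancel hD0 hDt, one_mul, mul_assoc]

lemma joeTotal_nonneg {n : ℕ} (a : ℝ) {x : Fin n → ℝ} (hx : ∀ i, -1 < x i ∧ x i < 1) :
    0 ≤ joeTotalIntegrand n a x := by
  unfold joeTotalIntegrand
  refine mul_nonneg (Finset.prod_nonneg fun i _ => Real.rpow_nonneg ?_ _)
    (Finset.prod_nonneg fun i _ => Finset.prod_nonneg fun j _ => abs_nonneg _)
  nlinarith [(hx i).1, (hx i).2]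

lemma jueTotal_nonneg {m μ : ℕ} (a : ℝ) {y : Fin m → ℝ} (hy : ∀ i, 0 < y i ∧ y i < 1) :
    0 ≤ jueTotalIntegrand m μ a y := by
  unfold jueTotalIntegrand
  refine mul_nonneg (Finset.prod_nonneg fun i _ => mul_nonneg (Real.rpow_nonneg ?_ _)
    (Real.rpow_nonneg ?_ _))
    (Finset.prod_nonneg fun i _ => Finset.prod_nonneg fun j _ => sq_nonneg _)
  · exact (hy i).1.le
  · linarith [(hy i).2]

lemma measurable_jueTotal (m μ : ℕ) (a : ℝ) : Measurable (jueTotalIntegrand m μ a) := by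
  unfold jueTotalIntegrand
  fun_prop

lemma integrable_joeTotal (n : ℕ) {a : ℝ} (ha : -1 < a) :
    IntegrableOn (joeTotalIntegrand n a) {x : Fin n → ℝ | ∀ i, -1 < x i ∧ x i < 1} := by
  have hset : {x : Fin n → ℝ | ∀ i, -1 < x i ∧ x i < 1} =
      Set.univ.pi fun _ : Fin n => Set.Ioo (-1 : ℝ) 1 := by
    ext x; simp
  have hw : IntegrableOn (fun u : ℝ => (1 - u ^ 2) ^ a) (Set.Ioo (-1) 1) :=
    (intervalIntegrable_iff_integrableOn_Ioo_of_le (by norm_num)).mp (intervalIntegrable_w ha)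
  have hprod : IntegrableOn (fun x : Fin n → ℝ => ∏ i, (1 - (x i) ^ 2) ^ a)
      {x : Fin n → ℝ | ∀ i, -1 < x i ∧ x i < 1} := by
    rw [hset, IntegrableOn, volume_pi, Measure.restrict_pi_pi]
    exact Integrable.fintype_prod (f := fun _ : Fin n => fun u : ℝ => (1 - u ^ 2) ^ a)
      fun _ => hw
  refine Integrable.mono' (hprod.const_mul (∏ k : Fin n, ∏ l ∈ Finset.Iio k, (2 : ℝ)))
    (measurable_joeTotal n a).aestronglyMeasurable ?_
  refine (ae_restrict_iff' (measurableSet_box (-1) 1)).mpr (Filter.Eventually.of_forall ?_)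
  intro x hx
  rw [Real.norm_of_nonneg (joeTotal_nonneg a hx), joeTotalIntegrand, mul_comm]
  refine mul_le_mul_of_nonneg_right ?_ (Finset.prod_nonneg fun i _ => Real.rpow_nonneg ?_ _)
  · refine Finset.prod_le_prod (fun i _ => Finset.prod_nonneg fun j _ => abs_nonneg _) ?_
    intro i _
    refine Finset.prod_le_prod (fun j _ => abs_nonneg _) ?_
    intro j _
    rw [abs_le]
    constructor <;> linarith [(hx i).1, (hx i).2, (hx j).1, (hx j).2]
  · nlinarith [(hx i).1, (hx i).2]

lemma joeTotal_lint_ne_zero (n : ℕ) (a : ℝ) :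
    ∫⁻ x in {x : Fin n → ℝ | ∀ i, -1 < x i ∧ x i < 1},
      ENNReal.ofReal (joeTotalIntegrand n a x) ≠ 0 := by
  intro h
  rw [lintegral_eq_zero_iff (measurable_joeTotal n a).ennreal_ofReal] at h
  have hset : {x : Fin n → ℝ | ∀ i, -1 < x i ∧ x i < 1} =
      Set.univ.pi fun _ : Fin n => Set.Ioo (-1 : ℝ) 1 := by
    ext x; simp
  have hF : ∀ᵐ x ∂(volume.restrict {x : Fin n → ℝ | ∀ i, -1 < x i ∧ x i < 1}), False := by
    filter_upwards [h, ae_restrict_of_ae (ae_injective n),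
      ae_restrict_mem (measurableSet_box (-1) 1)] with x h1 h2 hx
    have : 0 < joeTotalIntegrand n a x := by
      unfold joeTotalIntegrand
      refine mul_pos (Finset.prod_pos fun i _ => Real.rpow_pos_of_pos ?_ _)
        (Finset.prod_pos fun i _ => Finset.prod_pos fun j hj => abs_pos.mpr (sub_ne_zero.mpr ?_))
      · nlinarith [(hx i).1, (hx i).2]
      · intro e
        exact (Finset.mem_Iio.mp hj).ne (h2 e).symm
    have h3 := ENNReal.ofReal_pos.mpr this
    exact h3.ne' h1
  have h0 : volume.restrict {x : Fin n → ℝ | ∀ i, -1 < x i ∧ x i < 1} = 0 := by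
    rw [← ae_eq_bot]
    exact Filter.eventually_false_iff_eq_bot.mp hF
  rw [Measure.restrict_eq_zero, hset, Real.volume_pi_Ioo, Finset.prod_eq_zero_iff] at h0
  obtain ⟨i, _, hi⟩ := h0
  norm_num at hi

lemma joeGap_eq (n : ℕ) (a s : ℝ) (j : ℤ) : joeGapIntegrand n a s j =
    Set.indicator {x | ((cnt s fun i => |x i| : ℕ) : ℤ) = j} (joeTotalIntegrand n a) := by
  ext x
  simp only [joeGapIntegrand, Set.indicator_apply, cnt, joeTotalIntegrand, Set.mem_ofPred_eq]

lemma jueGap_eq (m μ : ℕ) (a c : ℝ) (k : ℕ) : jueGapIntegrand m μ a c k =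
    Set.indicator {y | cnt c y = k} (jueTotalIntegrand m μ a) := by
  ext x
  simp only [jueGapIntegrand, Set.indicator_apply, cnt, jueTotalIntegrand, Set.mem_ofPred_eq]

lemma measurable_cnt_abs (n : ℕ) (s : ℝ) :
    Measurable fun x : Fin n → ℝ => cnt s fun i => |x i| :=
  (measurable_cnt s).comp (by fun_prop)

/-- symmetric Jacobi case of Theorem 6.1: the gap probabilities of the
`n × n` symmetric Jacobi OE on `(-1,1)` and of the `m × m` Jacobi UE on `(0,1)` satisfy
`(A_{2k+μ-1} + A_{2k+μ})/Z₁ = B_k/Z₂`; all the integrals are finite and `Z₁, Z₂ > 0`. -/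
theorem jacobi_gap_probability (a : ℝ) (ha : -1 < a) (μ m n : ℕ) (hμ : μ = 0 ∨ μ = 1)
    (hm : 1 ≤ m) (hn : n = 2 * m + μ) (k : ℕ) (s : ℝ) (hs0 : 0 < s) (hs1 : s < 1) :
    (∀ j : ℤ, IntegrableOn (joeGapIntegrand n a s j)
      {x : Fin n → ℝ | ∀ i, -1 < x i ∧ x i < 1}) ∧
    IntegrableOn (joeTotalIntegrand n a) {x : Fin n → ℝ | ∀ i, -1 < x i ∧ x i < 1} ∧
    IntegrableOn (jueGapIntegrand m μ a (s ^ 2) k)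
      {y : Fin m → ℝ | ∀ i, 0 < y i ∧ y i < 1} ∧
    IntegrableOn (jueTotalIntegrand m μ a) {y : Fin m → ℝ | ∀ i, 0 < y i ∧ y i < 1} ∧
    (0 < ∫ x in {x : Fin n → ℝ | ∀ i, -1 < x i ∧ x i < 1}, joeTotalIntegrand n a x) ∧
    (0 < ∫ y in {y : Fin m → ℝ | ∀ i, 0 < y i ∧ y i < 1}, jueTotalIntegrand m μ a y) ∧
    ((∫ x in {x : Fin n → ℝ | ∀ i, -1 < x i ∧ x i < 1},
          joeGapIntegrand n a s (2 * (k : ℤ) + (μ : ℤ) - 1) x) +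
        ∫ x in {x : Fin n → ℝ | ∀ i, -1 < x i ∧ x i < 1},
          joeGapIntegrand n a s (2 * (k : ℤ) + (μ : ℤ)) x) /
      (∫ x in {x : Fin n → ℝ | ∀ i, -1 < x i ∧ x i < 1}, joeTotalIntegrand n a x) =
    (∫ y in {y : Fin m → ℝ | ∀ i, 0 < y i ∧ y i < 1}, jueGapIntegrand m μ a (s ^ 2) k y) /
      (∫ y in {y : Fin m → ℝ | ∀ i, 0 < y i ∧ y i < 1}, jueTotalIntegrand m μ a y) := by
  subst hn
  obtain ⟨C, hC⟩ := main_lint m μ hμ hm ha s hs0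
  have hcX : MeasurableSet {x : Fin (2 * m + μ) → ℝ | ∀ i, -1 < x i ∧ x i < 1} :=
    measurableSet_box (-1) 1
  have hcY : MeasurableSet {y : Fin m → ℝ | ∀ i, 0 < y i ∧ y i < 1} := measurableSet_box 0 1
  have hJ := integrable_joeTotal (2 * m + μ) ha
  have hJnn : 0 ≤ᵐ[volume.restrict {x : Fin (2 * m + μ) → ℝ | ∀ i, -1 < x i ∧ x i < 1}]
      joeTotalIntegrand (2 * m + μ) a :=
    (ae_restrict_iff' hcX).mpr (Filter.Eventually.of_forall fun x hx => joeTotal_nonneg a hx)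
  have hUnn : 0 ≤ᵐ[volume.restrict {y : Fin m → ℝ | ∀ i, 0 < y i ∧ y i < 1}]
      jueTotalIntegrand m μ a :=
    (ae_restrict_iff' hcY).mpr (Filter.Eventually.of_forall fun x hx => jueTotal_nonneg a hx)
  have hJt : ∫⁻ x in {x : Fin (2 * m + μ) → ℝ | ∀ i, -1 < x i ∧ x i < 1},
      ENNReal.ofReal (joeTotalIntegrand (2 * m + μ) a x) ≠ ⊤ :=
    ((hasFiniteIntegral_iff_ofReal hJnn).mp hJ.2).ne
  have hJ0 := joeTotal_lint_ne_zero (2 * m + μ) a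
  have h1 := hC fun _ => 1
  simp only [one_mul] at h1
  have hC0 : C ≠ 0 := by
    rintro rfl
    rw [zero_mul] at h1
    exact hJ0 h1
  have hU0 : ∫⁻ y in {y : Fin m → ℝ | ∀ i, 0 < y i ∧ y i < 1},
      ENNReal.ofReal (jueTotalIntegrand m μ a y) ≠ 0 := by
    intro h
    rw [h, mul_zero] at h1
    exact hJ0 h1
  have hUt : ∫⁻ y in {y : Fin m → ℝ | ∀ i, 0 < y i ∧ y i < 1},
      ENNReal.ofReal (jueTotalIntegrand m μ a y) ≠ ⊤ := by
    intro h
    rw [h, ENNReal.mul_top hC0] at h1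
    exact hJt h1
  have hU : IntegrableOn (jueTotalIntegrand m μ a) {y : Fin m → ℝ | ∀ i, 0 < y i ∧ y i < 1} :=
    ⟨(measurable_jueTotal m μ a).aestronglyMeasurable,
      (hasFiniteIntegral_iff_ofReal hUnn).mpr (lt_top_iff_ne_top.mpr hUt)⟩
  have hGm : ∀ j : ℤ, MeasurableSet
      {x : Fin (2 * m + μ) → ℝ | ((cnt s fun i => |x i| : ℕ) : ℤ) = j} := fun j =>
    measurable_cnt_abs _ s (MeasurableSet.of_discrete (s := {N : ℕ | (N : ℤ) = j}))
  have hHm : MeasurableSet {y : Fin m → ℝ | cnt (s ^ 2) y = k} :=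
    measurable_cnt (s ^ 2) (MeasurableSet.of_discrete (s := {N : ℕ | N = k}))
  have hG : ∀ j : ℤ, IntegrableOn (joeGapIntegrand (2 * m + μ) a s j)
      {x : Fin (2 * m + μ) → ℝ | ∀ i, -1 < x i ∧ x i < 1} := by
    intro j
    rw [joeGap_eq]
    exact Integrable.indicator hJ (hGm j)
  have hH : IntegrableOn (jueGapIntegrand m μ a (s ^ 2) k)
      {y : Fin m → ℝ | ∀ i, 0 < y i ∧ y i < 1} := by
    rw [jueGap_eq]
    exact Integrable.indicator hU hHm
  have hZ1 : ∫ x in {x : Fin (2 * m + μ) → ℝ | ∀ i, -1 < x i ∧ x i < 1},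
      joeTotalIntegrand (2 * m + μ) a x = (∫⁻ x in {x : Fin (2 * m + μ) → ℝ |
        ∀ i, -1 < x i ∧ x i < 1}, ENNReal.ofReal (joeTotalIntegrand (2 * m + μ) a x)).toReal :=
    integral_eq_lintegral_of_nonneg_ae hJnn hJ.1
  have hZ2 : ∫ y in {y : Fin m → ℝ | ∀ i, 0 < y i ∧ y i < 1},
      jueTotalIntegrand m μ a y = (∫⁻ y in {y : Fin m → ℝ | ∀ i, 0 < y i ∧ y i < 1},
        ENNReal.ofReal (jueTotalIntegrand m μ a y)).toReal :=
    integral_eq_lintegral_of_nonneg_ae hUnn hU.1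
  have hZ1pos : 0 < ∫ x in {x : Fin (2 * m + μ) → ℝ | ∀ i, -1 < x i ∧ x i < 1},
      joeTotalIntegrand (2 * m + μ) a x := by
    rw [hZ1]; exact ENNReal.toReal_pos hJ0 hJt
  have hZ2pos : 0 < ∫ y in {y : Fin m → ℝ | ∀ i, 0 < y i ∧ y i < 1},
      jueTotalIntegrand m μ a y := by
    rw [hZ2]; exact ENNReal.toReal_pos hU0 hUt
  refine ⟨hG, hJ, hH, hU, hZ1pos, hZ2pos, ?_⟩
  have hk := hC fun N => if N = k then 1 else 0
  have hB : ∫ y in {y : Fin m → ℝ | ∀ i, 0 < y i ∧ y i < 1}, jueGapIntegrand m μ a (s ^ 2) k y =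
      (∫⁻ y in {y : Fin m → ℝ | ∀ i, 0 < y i ∧ y i < 1},
        (if cnt (s ^ 2) y = k then (1 : ENNReal) else 0) *
          ENNReal.ofReal (jueTotalIntegrand m μ a y)).toReal := by
    rw [integral_eq_lintegral_of_nonneg_ae _ hH.1]
    · congr 1
      refine lintegral_congr fun y => ?_
      rw [jueGap_eq, Set.indicator_apply]
      by_cases h : cnt (s ^ 2) y = k <;> simp [h]
    · filter_upwards [hUnn] with y hy
      rw [jueGap_eq, Set.indicator_apply]
      split_ifs
      · exact hy
      · exact le_rfl
  have hsum : ∀ x : Fin (2 * m + μ) → ℝ,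
      joeGapIntegrand (2 * m + μ) a s (2 * (k : ℤ) + (μ : ℤ) - 1) x +
        joeGapIntegrand (2 * m + μ) a s (2 * (k : ℤ) + (μ : ℤ)) x =
      if ((cnt s fun i => |x i|) + 1 - μ) / 2 = k then joeTotalIntegrand (2 * m + μ) a x
        else 0 := by
    intro x
    simp only [joeGap_eq, Set.indicator_apply, Set.mem_ofPred_eq]
    split_ifs
    all_goals first | omega | simp
  have hA : (∫ x in {x : Fin (2 * m + μ) → ℝ | ∀ i, -1 < x i ∧ x i < 1},
          joeGapIntegrand (2 * m + μ) a s (2 * (k : ℤ) + (μ : ℤ) - 1) x) +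
        ∫ x in {x : Fin (2 * m + μ) → ℝ | ∀ i, -1 < x i ∧ x i < 1},
          joeGapIntegrand (2 * m + μ) a s (2 * (k : ℤ) + (μ : ℤ)) x =
      (∫⁻ x in {x : Fin (2 * m + μ) → ℝ | ∀ i, -1 < x i ∧ x i < 1},
        (if ((cnt s fun i => |x i|) + 1 - μ) / 2 = k then (1 : ENNReal) else 0) *
          ENNReal.ofReal (joeTotalIntegrand (2 * m + μ) a x)).toReal := by
    rw [← integral_add (hG _) (hG _), integral_eq_lintegral_of_nonneg_ae]
    · congr 1
      refine lintegral_congr fun x => ?_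
      rw [hsum]
      split_ifs <;> simp
    · filter_upwards [hJnn] with x hx
      rw [hsum]
      split_ifs
      · exact hx
      · exact le_rfl
    · exact ((hG _).add (hG _)).1
  rw [hA, hB, hk, hZ1, hZ2, h1, ENNReal.toReal_mul, ENNReal.toReal_mul]
  refine mul_div_mul_left _ _ ?_
  intro h
  rw [hZ1, h1, ENNReal.toReal_mul, h, zero_mul] at hZ1pos
  exact lt_irrefl _ hZ1pos
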